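/- For every n ∈ ℤ there is a ℂ-linear bijection Φ from the charge-n component F_{(n)} onto the polynomial algebra ℂ[x_1, x_2, x_3, …] in countably many commuting variables such that Φ(v_n) = 1 and, for every m ≥ 1 and every u ∈ F_{(n)}: Φ(h_m u) = ∂Φ(u)/∂x_m, Φ(h_{−m} u) = m · x_m · Φ(u), and Φ(h_0 u) = n · Φ(u). (Thus F^{⊗1/2} = ⊕_{n∈ℤ} F_{(n)} decomposes as a direct sum of irreducible highest weight Heisenberg modules B_n ≅ ℂ[x_1, x_2, …].) -/

import Mathlib

noncomputable section

/-- The neutral fermion Fock space `F = F^{⊗1/2}`: the complex vector space with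
basis `{e_S : S a finite subset of ℕ}`. -/
abbrev FockD : Type := Finset ℕ →₀ ℂ

/-- Basis vector `e_S`. -/
def eD (S : Finset ℕ) : FockD := Finsupp.single S 1

/-- Action of the fermion mode `a_m` on the basis vector `e_S`. -/
def aVec (m : ℤ) (S : Finset ℕ) : FockD :=
  if 0 ≤ m then
    if m.toNat ∈ S then 0
    else ((-1 : ℂ) ^ (S.filter (fun s => m.toNat < s)).card) • eD (insert m.toNat S)
  else
    if (-m - 1).toNat ∈ S then
      ((-1 : ℂ) ^ (S.filter (fun s => (-m - 1).toNat < s)).card) • eD (S.erase ((-m - 1).toNat))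
    else 0

/-- The fermion mode `a_m` as a linear operator on `F`. -/
def aOp (m : ℤ) : FockD →ₗ[ℂ] FockD :=
  Finsupp.lsum ℂ fun S => LinearMap.toSpanSingleton ℂ FockD (aVec m S)

/-- Fermionic normal ordered product `:a_i a_j:`. -/
def NO (i j : ℤ) : FockD →ₗ[ℂ] FockD :=
  if 0 ≤ i then (aOp i).comp (aOp j) else -((aOp j).comp (aOp i))

/-- Heisenberg operator `h_n = (1/2) ∑_{i∈ℤ} (−1)^{i+1} :a_i a_{−2n−1−i}:`
(on each vector only finitely many summands are nonzero). -/
def hD (n : ℤ) (x : FockD) : FockD :=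
  (1 / 2 : ℂ) • ∑ᶠ i : ℤ, ((-1 : ℂ) ^ (i + 1)) • NO i (-2 * n - 1 - i) x

/-- Virasoro operator `L^{1/2}_m = (1/2) ∑_{i∈ℤ} i · :a_i a_{−m−i−1}:`. -/
def LhalfD (m : ℤ) (x : FockD) : FockD :=
  (1 / 2 : ℂ) • ∑ᶠ i : ℤ, (i : ℂ) • NO i (-m - i - 1) x

/-- 2-point Virasoro operator `L¹_n = (1/2) ∑_{j∈ℤ} :h_j h_{n−j}:`, where the bosonic
normal ordered product is `:h_j h_k: = h_j h_k` if `j ≤ k` and `h_k h_j` otherwise. -/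
def L1D (n : ℤ) (x : FockD) : FockD :=
  (1 / 2 : ℂ) • ∑ᶠ j : ℤ, if j ≤ n - j then hD j (hD (n - j) x) else hD (n - j) (hD j x)

/-- Charge `c(S) = #{s ∈ S : s odd} − #{s ∈ S : s even}`. -/
def chg (S : Finset ℕ) : ℤ :=
  ((S.filter fun s => Odd s).card : ℤ) - ((S.filter fun s => Even s).card : ℤ)

/-- Charge-`n` component `F_{(n)}`: the span of the `e_S` with `c(S) = n`. -/
def FockComp (n : ℤ) : Submodule ℂ FockD :=
  Submodule.span ℂ {x : FockD | ∃ S : Finset ℕ, chg S = n ∧ x = eD S}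

/-- Index set of the vacuum-like vector `v_n`. -/
def vSet (n : ℤ) : Finset ℕ :=
  if 0 ≤ n then (Finset.range n.toNat).image fun i => 2 * i + 1
  else (Finset.range (-n).toNat).image fun i => 2 * i

/-- Vacuum-like vector `v_n` (`v_0 = e_∅`, `v_n = e_{{1,3,…,2n−1}}`,
`v_{−n} = e_{{0,2,…,2n−2}}` for `n > 0`). -/
def vD (n : ℤ) : FockD := eD (vSet n)

/-- sign -/
def sgD (t : ℕ) (S : Finset ℕ) : ℂ := (-1 : ℂ) ^ (S.filter (fun s => t < s)).card

theorem sgD_insert (t u : ℕ) (S : Finset ℕ) (h : u ∉ S) :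
    sgD t (insert u S) = if t < u then - sgD t S else sgD t S := by
  unfold sgD
  rw [Finset.filter_insert]
  split_ifs with h1
  · rw [Finset.card_insert_of_notMem (by simp [h]), pow_succ]; ring
  · rfl

theorem sgD_erase (t u : ℕ) (S : Finset ℕ) (h : u ∈ S) :
    sgD t (S.erase u) = if t < u then - sgD t S else sgD t S := by
  have := sgD_insert t u (S.erase u) (by simp)
  rw [Finset.insert_erase h] at this
  rw [this]; split_ifs <;> simp

theorem sgD_sq (t : ℕ) (S : Finset ℕ) : sgD t S * sgD t S = 1 := by
  unfold sgD
  rw [← pow_add, ← two_mul, pow_mul]; simp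

theorem aOp_eD (m : ℤ) (S : Finset ℕ) : aOp m (eD S) = aVec m S := by
  simp [aOp, eD]

theorem aOp_cr (t : ℕ) (S : Finset ℕ) :
    aOp (t : ℤ) (eD S) = if t ∈ S then 0 else sgD t S • eD (insert t S) := by
  rw [aOp_eD]; simp [aVec, sgD]

theorem aOp_an (t : ℕ) (S : Finset ℕ) :
    aOp (-(t : ℤ) - 1) (eD S) = if t ∈ S then sgD t S • eD (S.erase t) else 0 := by
  rw [aOp_eD]
  have h : ¬ (0 ≤ -(t : ℤ) - 1) := by omega
  have h2 : (-(-(t : ℤ) - 1) - 1).toNat = t := by omega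
  simp only [aVec, sgD, if_neg h, h2]

theorem hom_ext_eD {M : Type*} [AddCommGroup M] [Module ℂ M] {f g : FockD →ₗ[ℂ] M}
    (h : ∀ S, f (eD S) = g (eD S)) : f = g := by
  apply Finsupp.lhom_ext'
  intro S
  ext
  exact h S

theorem int_cases (i : ℤ) : (∃ t : ℕ, i = t) ∨ (∃ t : ℕ, i = -(t : ℤ) - 1) := by
  by_cases h : 0 ≤ i
  · exact Or.inl ⟨i.toNat, by omega⟩
  · exact Or.inr ⟨(-i - 1).toNat, by omega⟩

theorem car_cr_cr (t u : ℕ) (S : Finset ℕ) :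
    aOp (t : ℤ) (aOp (u : ℤ) (eD S)) + aOp (u : ℤ) (aOp (t : ℤ) (eD S)) = 0 := by
  rw [aOp_cr, aOp_cr]
  by_cases hu : u ∈ S <;> by_cases ht : t ∈ S <;> simp [hu, ht, aOp_cr]
  rcases lt_trichotomy t u with h | h | h
  · rw [if_neg (by omega), if_neg (by omega), sgD_insert _ _ _ hu, sgD_insert _ _ _ ht,
      if_pos h, if_neg (by omega), Finset.insert_comm, smul_smul, smul_smul, ← add_smul]
    convert zero_smul ℂ _; ring
  · simp [h]
  · rw [if_neg (by omega), if_neg (by omega), sgD_insert _ _ _ hu, sgD_insert _ _ _ ht,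
      if_pos h, if_neg (by omega), Finset.insert_comm, smul_smul, smul_smul, ← add_smul]
    convert zero_smul ℂ _; ring

theorem car_an_an (t u : ℕ) (S : Finset ℕ) :
    aOp (-(t : ℤ) - 1) (aOp (-(u : ℤ) - 1) (eD S)) +
      aOp (-(u : ℤ) - 1) (aOp (-(t : ℤ) - 1) (eD S)) = 0 := by
  rw [aOp_an, aOp_an]
  by_cases hu : u ∈ S <;> by_cases ht : t ∈ S <;> simp [hu, ht, aOp_an]
  rcases lt_trichotomy t u with h | h | h
  · rw [if_neg (by omega), if_neg (by omega), sgD_erase _ _ _ hu, sgD_erase _ _ _ ht,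
      if_pos h, if_neg (by omega), Finset.erase_right_comm, smul_smul, smul_smul, ← add_smul]
    convert zero_smul ℂ _; ring
  · simp [h]
  · rw [if_neg (by omega), if_neg (by omega), sgD_erase _ _ _ hu, sgD_erase _ _ _ ht,
      if_pos h, if_neg (by omega), Finset.erase_right_comm, smul_smul, smul_smul, ← add_smul]
    convert zero_smul ℂ _; ring

theorem car_cr_an (t u : ℕ) (S : Finset ℕ) :
    aOp (t : ℤ) (aOp (-(u : ℤ) - 1) (eD S)) + aOp (-(u : ℤ) - 1) (aOp (t : ℤ) (eD S))
      = if t = u then eD S else 0 := by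
  rw [aOp_an, aOp_cr]
  by_cases htu : t = u
  · subst htu
    by_cases ht : t ∈ S
    · simp [ht, aOp_cr, sgD_erase _ _ _ ht, smul_smul, sgD_sq, Finset.insert_erase ht]
    · simp [ht, aOp_an, sgD_insert _ _ _ ht, smul_smul, sgD_sq, Finset.erase_insert ht]
  · by_cases hu : u ∈ S <;> by_cases ht : t ∈ S <;> simp [hu, ht, aOp_an, aOp_cr, htu, Ne.symm htu]
    rw [sgD_erase _ _ _ hu, sgD_insert _ _ _ ht,
      Finset.erase_insert_of_ne htu, smul_smul, smul_smul, ← add_smul]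
    convert zero_smul ℂ _
    rcases lt_or_gt_of_ne htu with h | h
    · rw [if_pos h, if_neg (by omega)]; ring
    · rw [if_neg (by omega), if_pos h]; ring

theorem car (i j : ℤ) (w : FockD) :
    aOp i (aOp j w) + aOp j (aOp i w) = if i + j = -1 then w else 0 := by
  have : (aOp i).comp (aOp j) + (aOp j).comp (aOp i)
      = if i + j = -1 then LinearMap.id else 0 := by
    apply hom_ext_eD
    intro S
    simp only [LinearMap.add_apply, LinearMap.comp_apply]
    rcases int_cases i with ⟨t, rfl⟩ | ⟨t, rfl⟩ <;> rcases int_cases j with ⟨u, rfl⟩ | ⟨u, rfl⟩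
    · rw [car_cr_cr, if_neg (by omega)]; rfl
    · rw [car_cr_an]
      by_cases h : t = u
      · rw [if_pos h, if_pos (by omega)]; rfl
      · rw [if_neg h, if_neg (by omega)]; rfl
    · rw [add_comm, car_cr_an]
      by_cases h : u = t
      · rw [if_pos h, if_pos (by omega)]; rfl
      · rw [if_neg h, if_neg (by omega)]; rfl
    · rw [car_an_an, if_neg (by omega)]; rfl
  have h2 := LinearMap.congr_fun this w
  simp only [LinearMap.add_apply, LinearMap.comp_apply] at h2
  rw [h2]; split_ifs <;> rfl

theorem anti (i j : ℤ) (h : i + j ≠ -1) (w : FockD) :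
    aOp i (aOp j w) = - aOp j (aOp i w) := by
  have := car i j w
  rw [if_neg h] at this
  exact eq_neg_of_add_eq_zero_left this

theorem NO_pos (i j : ℤ) (h : 0 ≤ i) (w : FockD) : NO i j w = aOp i (aOp j w) := by
  simp [NO, h]

theorem NO_neg (i j : ℤ) (h : i < 0) (w : FockD) : NO i j w = - aOp j (aOp i w) := by
  simp [NO, not_le.2 h]

/-- normal order versus product -/
theorem NO_eq (i j : ℤ) (w : FockD) :
    NO i j w = aOp i (aOp j w) - if i < 0 ∧ i + j = -1 then w else 0 := by
  by_cases h : 0 ≤ i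
  · rw [NO_pos _ _ h, if_neg (by omega), sub_zero]
  · rw [NO_neg _ _ (by omega)]
    have := car i j w
    by_cases h2 : i + j = -1
    · rw [if_pos h2] at this
      rw [if_pos (by omega)]; nth_rewrite 3 [← this]; abel
    · rw [if_neg h2] at this
      rw [if_neg (by omega), eq_neg_of_add_eq_zero_left this]; abel

theorem NO_swap (i j : ℤ) (w : FockD) : NO j i w = - NO i j w := by
  by_cases hi : 0 ≤ i <;> by_cases hj : 0 ≤ j
  · rw [NO_pos _ _ hi, NO_pos _ _ hj, anti _ _ (by omega)]
  · rw [NO_pos _ _ hi, NO_neg _ _ (by omega)]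
  · rw [NO_pos _ _ hj, NO_neg _ _ (by omega)]; simp
  · rw [NO_neg _ _ (by omega), NO_neg _ _ (by omega), anti _ _ (by omega)]

theorem NO_comm_a (i j k : ℤ) (w : FockD) :
    NO i j (aOp k w) = aOp k (NO i j w) + (if j + k = -1 then aOp i w else 0)
      - (if i + k = -1 then aOp j w else 0) := by
  have h1 := car j k w
  have h2 := car i k (aOp j w)
  have e1 : aOp j (aOp k w) = (if j + k = -1 then w else 0) - aOp k (aOp j w) := by
    rw [← h1]; abel
  have e2 : aOp i (aOp k (aOp j w)) = (if i + k = -1 then aOp j w else 0)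
      - aOp k (aOp i (aOp j w)) := by
    rw [← h2]; abel
  rw [NO_eq, NO_eq, e1, map_sub, e2, map_sub]
  have e3 : aOp i (if j + k = -1 then w else 0) = if j + k = -1 then aOp i w else 0 := by
    split_ifs <;> simp
  have e4 : aOp k (if i < 0 ∧ i + j = -1 then w else 0)
      = if i < 0 ∧ i + j = -1 then aOp k w else 0 := by
    split_ifs <;> simp
  rw [e3, e4]; abel

/-- every vector is killed by far annihilators -/
theorem locfin (w : FockD) : ∃ N : ℤ, 0 ≤ N ∧ ∀ j < -N, aOp j w = 0 := by
  induction w using Finsupp.induction_linear with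
  | zero => exact ⟨0, le_rfl, by simp⟩
  | add f g hf hg =>
    obtain ⟨N, hN0, hN⟩ := hf
    obtain ⟨M, hM0, hM⟩ := hg
    refine ⟨max N M, by omega, fun j hj => ?_⟩
    rw [map_add, hN j (by omega), hM j (by omega), add_zero]
  | single S c =>
    refine ⟨(S.sup id : ℕ) + 1, by omega, fun j hj => ?_⟩
    have : Finsupp.single S c = c • eD S := by simp [eD]
    rw [this, map_smul]
    rcases int_cases j with ⟨u, rfl⟩ | ⟨u, rfl⟩
    · omega
    · rw [aOp_an, if_neg, smul_zero]
      intro hu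
      have : u ≤ S.sup id := Finset.le_sup (f := id) hu
      omega
theorem NO_zero_of (c i N : ℤ) (w : FockD) (hN0 : 0 ≤ N) (hN : ∀ j < -N, aOp j w = 0)
    (hi : i < -N ∨ (0 ≤ i ∧ c + N < i)) : NO i (c - i) w = 0 := by
  rcases hi with hi | ⟨h0, hi⟩
  · rw [NO_neg _ _ (by omega), hN i hi]; simp
  · rw [NO_pos _ _ h0, hN _ (by omega)]; simp

theorem h_supp (n : ℤ) (w : FockD) :
    (Function.support fun i : ℤ => ((-1 : ℂ) ^ (i + 1)) • NO i (-2 * n - 1 - i) w).Finite := by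
  obtain ⟨N, hN0, hN⟩ := locfin w
  apply Set.Finite.subset (Set.finite_Icc (-N) (max 0 (-2 * n - 1 + N)))
  intro i hi
  by_contra hc
  apply hi
  rw [Set.mem_Icc] at hc
  simp only
  rw [NO_zero_of _ i N w hN0 hN (by omega), smul_zero]

/-- the Heisenberg operator as a linear map -/
def hL (n : ℤ) : FockD →ₗ[ℂ] FockD where
  toFun := hD n
  map_add' x y := by
    unfold hD
    rw [← smul_add, ← finsum_add_distrib (h_supp n x) (h_supp n y)]
    simp only [map_add, smul_add]
  map_smul' c x := by
    unfold hD
    rw [RingHom.id_apply, smul_comm c, smul_finsum' c (h_supp n x)]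
    simp only [map_smul, smul_comm c]

theorem hL_apply (n : ℤ) (x : FockD) : hL n x = hD n x := rfl

/-- parity sign -/
def epsD (k : ℤ) : ℂ := (-1 : ℂ) ^ (k + 1)

theorem epsD_sq (k : ℤ) : epsD k * epsD k = 1 := by
  unfold epsD
  rw [← zpow_add₀ (by norm_num)]
  exact Even.neg_one_zpow ⟨_, rfl⟩

theorem epsD_add_even (k r : ℤ) : epsD (k + 2 * r) = epsD k := by
  unfold epsD
  rw [show k + 2 * r + 1 = (k + 1) + 2 * r by ring, zpow_add₀ (by norm_num),
    Even.neg_one_zpow (even_two_mul r), mul_one]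

theorem epsD_add_odd (k r : ℤ) : epsD (k + (2 * r + 1)) = - epsD k := by
  rw [show k + (2 * r + 1) = (k + 1) + 2 * r by ring, epsD_add_even]
  unfold epsD
  rw [zpow_add₀ (by norm_num) (k + 1)]; simp

theorem epsD_even (r : ℤ) : epsD (2 * r) = -1 := by
  have := epsD_add_even 0 r
  rw [zero_add] at this
  rw [this]; simp [epsD]

theorem epsD_odd (r : ℤ) : epsD (2 * r + 1) = 1 := by
  have := epsD_add_odd 0 r
  rw [zero_add] at this
  rw [this]; simp [epsD]

theorem hL_par (n k : ℤ) (w : FockD) (s : Finset ℤ)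
    (hs : ∀ r ∉ s, NO (k + 2 * r) (-2 * n - 1 - (k + 2 * r)) w = 0) :
    hL n w = epsD k • ∑ r ∈ s, NO (k + 2 * r) (-2 * n - 1 - (k + 2 * r)) w := by
  classical
  rw [hL_apply, hD]
  set F : ℤ → FockD := fun i => ((-1 : ℂ) ^ (i + 1)) • NO i (-2 * n - 1 - i) w with hF
  have hinj1 : Set.InjOn (fun r : ℤ => k + 2 * r) s := by
    intro a _ b _ h; simp only at h; omega
  have hinj2 : Set.InjOn (fun r : ℤ => -2 * n - 1 - (k + 2 * r)) s := by
    intro a _ b _ h; simp only at h; omega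
  have hsub : Function.support F ⊆ ↑(s.image (fun r : ℤ => k + 2 * r) ∪
      s.image (fun r : ℤ => -2 * n - 1 - (k + 2 * r))) := by
    intro i hi
    by_contra hc
    apply hi
    simp only [Finset.coe_union, Finset.coe_image, Set.mem_union, Set.mem_image,
      Finset.mem_coe, not_or, not_exists, not_and] at hc
    rcases Int.emod_two_eq_zero_or_one (i - k) with h | h
    · have hr : (i - k) / 2 ∉ s := fun hm => hc.1 _ hm (by omega)
      have := hs _ hr
      rw [show k + 2 * ((i - k) / 2) = i by omega] at this
      simp only [hF]
      rw [this, smul_zero]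
    · have hr : (-2 * n - 1 - i - k) / 2 ∉ s := fun hm => hc.2 _ hm (by omega)
      have := hs _ hr
      rw [show k + 2 * ((-2 * n - 1 - i - k) / 2) = -2 * n - 1 - i by omega, NO_swap,
        neg_eq_zero, show -2 * n - 1 - (-2 * n - 1 - i) = i by ring] at this
      simp only [hF]
      rw [this, smul_zero]
  rw [finsum_eq_sum_of_support_subset F hsub, Finset.sum_union, Finset.sum_image hinj1,
    Finset.sum_image hinj2]
  · have e1 : ∀ r ∈ s, F (k + 2 * r) = epsD k • NO (k + 2 * r) (-2 * n - 1 - (k + 2 * r)) w := by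
      intro r _
      simp only [hF]
      rw [← epsD_add_even k r, epsD]
    have e2 : ∀ r ∈ s, F (-2 * n - 1 - (k + 2 * r))
        = epsD k • NO (k + 2 * r) (-2 * n - 1 - (k + 2 * r)) w := by
      intro r _
      simp only [hF]
      rw [show -2 * n - 1 - (-2 * n - 1 - (k + 2 * r)) = k + 2 * r by ring,
        NO_swap (k + 2 * r)]
      have : ((-1 : ℂ) ^ (-2 * n - 1 - (k + 2 * r) + 1)) = - epsD k := by
        have := epsD_add_odd k (-n - 1 - k - r)
        rw [← this, epsD]; congr 1; ring
      rw [this, smul_neg, neg_smul, neg_neg]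
    rw [Finset.sum_congr rfl e1, Finset.sum_congr rfl e2, ← Finset.smul_sum, ← two_smul ℂ,
      smul_smul]
    norm_num
  · rw [Finset.disjoint_left]
    intro x h1 h2
    simp only [Finset.mem_image] at h1 h2
    obtain ⟨a, _, ha⟩ := h1
    obtain ⟨b, _, hb⟩ := h2
    omega

theorem par_finite (n k : ℤ) (w : FockD) :
    ∃ s : Finset ℤ, ∀ r ∉ s, NO (k + 2 * r) (-2 * n - 1 - (k + 2 * r)) w = 0 := by
  obtain ⟨N, hN0, hN⟩ := locfin w
  refine ⟨Finset.Icc (-(N + |k| + |n|)) (N + |k| + 2 * |n|), fun r hr => ?_⟩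
  apply NO_zero_of _ _ N w hN0 hN
  rw [Finset.mem_Icc] at hr
  have h1 := abs_nonneg k
  have h2 := abs_nonneg n
  have h3 := le_abs_self k
  have h4 := le_abs_self n
  have h5 := neg_abs_le k
  have h6 := neg_abs_le n
  omega

theorem h_comm_a (n k : ℤ) (w : FockD) :
    hL n (aOp k w) = aOp k (hL n w) + epsD k • aOp (k - 2 * n) w := by
  classical
  obtain ⟨s1, hs1⟩ := par_finite n k w
  obtain ⟨s2, hs2⟩ := par_finite n k (aOp k w)
  set s := insert (-n) (s1 ∪ s2) with hs
  rw [hL_par n k w s (fun r hr => hs1 r (by simp [hs] at hr; tauto)),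
    hL_par n k (aOp k w) s (fun r hr => hs2 r (by simp [hs] at hr; tauto)), map_smul, map_sum,
    ← smul_add]
  congr 1
  have : ∀ r ∈ s, NO (k + 2 * r) (-2 * n - 1 - (k + 2 * r)) (aOp k w)
      = aOp k (NO (k + 2 * r) (-2 * n - 1 - (k + 2 * r)) w)
        + if r = -n then aOp (k - 2 * n) w else 0 := by
    intro r _
    rw [NO_comm_a, if_neg (show ¬ (k + 2 * r + k = -1) by omega), sub_zero]
    congr 1
    by_cases h : r = -n
    · rw [if_pos h, if_pos (by omega)]; congr 2; omega
    · rw [if_neg h, if_neg (by omega)]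
  rw [Finset.sum_congr rfl this, Finset.sum_add_distrib]
  congr 1
  simp [hs]

theorem aOp_pos_empty (i : ℤ) (hi : 0 ≤ i) (w : FockD) : aOp i w ∅ = 0 := by
  have : (Finsupp.lapply ∅ : FockD →ₗ[ℂ] ℂ).comp (aOp i) = 0 := by
    apply hom_ext_eD
    intro S
    rcases int_cases i with ⟨t, rfl⟩ | ⟨t, rfl⟩
    · simp only [LinearMap.comp_apply, aOp_cr]
      split_ifs with h
      · simp
      · simp [eD]
    · omega
  exact LinearMap.congr_fun this w

theorem aOp_neg_vac (i : ℤ) (hi : i < 0) : aOp i (eD ∅) = 0 := by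
  rcases int_cases i with ⟨t, rfl⟩ | ⟨t, rfl⟩
  · omega
  · rw [aOp_an]; simp

theorem NO_vac (i j : ℤ) : NO i j (eD ∅) ∅ = 0 := by
  by_cases hi : 0 ≤ i
  · rw [NO_pos _ _ hi, aOp_pos_empty _ hi]
  · rw [NO_neg _ _ (by omega), aOp_neg_vac i (by omega)]; simp

theorem hL_vac_coeff (n : ℤ) : hL n (eD ∅) ∅ = 0 := by
  obtain ⟨s, hs⟩ := par_finite n 0 (eD ∅)
  rw [hL_par n 0 _ s hs]
  simp only [Finsupp.smul_apply, Finsupp.finsetSum_apply, NO_vac]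
  simp

theorem hL_vac (n : ℤ) (hn : 0 ≤ n) : hL n (eD ∅) = 0 := by
  rw [hL_par n 0 _ ∅]
  · simp
  · intro r _
    by_cases hi : 0 ≤ 0 + 2 * r
    · rw [NO_pos _ _ hi, aOp_neg_vac _ (by omega)]; simp
    · rw [NO_neg _ _ (by omega), aOp_neg_vac _ (by omega)]; simp

theorem killed_coeff (w : FockD) (h : ∀ j < 0, aOp j w = 0) : w = w ∅ • eD ∅ := by
  ext S
  by_cases hS : S = ∅
  · subst hS; simp [eD]
  · obtain ⟨t, ht⟩ := Finset.nonempty_iff_ne_empty.2 hS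
    have key : ∀ v : FockD, aOp (-(t : ℤ) - 1) v (S.erase t) = sgD t S * v S := by
      intro v
      have : (Finsupp.lapply (S.erase t) : FockD →ₗ[ℂ] ℂ).comp (aOp (-(t : ℤ) - 1))
          = sgD t S • (Finsupp.lapply S : FockD →ₗ[ℂ] ℂ) := by
        apply hom_ext_eD
        intro U
        simp only [LinearMap.comp_apply, LinearMap.smul_apply, aOp_an, Finsupp.lapply_apply]
        by_cases hU : U = S
        · subst hU; simp [ht, eD]
        · have e1 : (eD U) S = 0 := by simp [eD, hU]
          rw [e1]
          split_ifs with h1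
          · have : U.erase t ≠ S.erase t := by
              intro h2
              apply hU
              rw [← Finset.insert_erase h1, h2, Finset.insert_erase ht]
            simp [eD, this]
          · simp
      exact LinearMap.congr_fun this v
    have h0 := key w
    rw [h _ (by omega)] at h0
    have hne : sgD t S ≠ 0 := by
      intro h3; have := sgD_sq t S; rw [h3] at this; simp at this
    have : w S = 0 := by
      simpa [hne] using h0.symm
    simp [this, eD, Ne.symm hS]

/-- An operator commuting with all fermion modes is a scalar. -/
theorem commutant (C : FockD →ₗ[ℂ] FockD) (hC : ∀ k w, C (aOp k w) = aOp k (C w)) (w : FockD) :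
    C w = C (eD ∅) ∅ • w := by
  have h0 : C (eD ∅) = C (eD ∅) ∅ • eD ∅ := by
    apply killed_coeff
    intro j hj
    rw [← hC, aOp_neg_vac j hj, map_zero]
  have : C = C (eD ∅) ∅ • LinearMap.id := by
    apply hom_ext_eD
    intro S
    simp only [LinearMap.smul_apply, LinearMap.id_apply]
    induction S using Finset.induction_on with
    | empty => exact h0
    | insert t S ht ih =>
      have : eD (insert t S) = sgD t S • aOp (t : ℤ) (eD S) := by
        rw [aOp_cr, if_neg ht, smul_smul, sgD_sq, one_smul]
      rw [this, map_smul, hC, ih, map_smul, smul_comm]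
  exact LinearMap.congr_fun this w
/-- diagonal operator attached to a function on modes -/
def diagL (f : ℕ → ℂ) : FockD →ₗ[ℂ] FockD :=
  Finsupp.lsum ℂ fun S => LinearMap.toSpanSingleton ℂ FockD ((∑ s ∈ S, f s) • eD S)

theorem diagL_eD (f : ℕ → ℂ) (S : Finset ℕ) : diagL f (eD S) = (∑ s ∈ S, f s) • eD S := by
  simp [diagL, eD]

theorem diagL_coeff (f : ℕ → ℂ) (w : FockD) (S : Finset ℕ) :
    diagL f w S = (∑ s ∈ S, f s) * w S := by
  have : (Finsupp.lapply S : FockD →ₗ[ℂ] ℂ).comp (diagL f)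
      = (∑ s ∈ S, f s) • (Finsupp.lapply S : FockD →ₗ[ℂ] ℂ) := by
    apply hom_ext_eD
    intro U
    simp only [LinearMap.comp_apply, LinearMap.smul_apply, diagL_eD, Finsupp.lapply_apply]
    by_cases hU : U = S
    · subst hU; simp [eD]
    · simp [eD, hU]
  exact LinearMap.congr_fun this w

theorem diag_comm_a (f : ℕ → ℂ) (g : ℤ → ℂ) (h1 : ∀ t : ℕ, g t = f t)
    (h2 : ∀ t : ℕ, g (-(t : ℤ) - 1) = - f t) (k : ℤ) (w : FockD) :
    diagL f (aOp k w) = aOp k (diagL f w) + g k • aOp k w := by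
  have : (diagL f).comp (aOp k) = (aOp k).comp (diagL f) + g k • aOp k := by
    apply hom_ext_eD
    intro S
    simp only [LinearMap.comp_apply, LinearMap.smul_apply, LinearMap.add_apply, diagL_eD, map_smul]
    rcases int_cases k with ⟨t, rfl⟩ | ⟨t, rfl⟩
    · rw [h1, aOp_cr]
      split_ifs with h
      · simp
      · rw [map_smul, diagL_eD, Finset.sum_insert h]; module
    · rw [h2, aOp_an]
      split_ifs with h
      · rw [map_smul, diagL_eD, ← Finset.add_sum_erase S f h]; module
      · simp
  exact LinearMap.congr_fun this w

/-- mode energy -/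
def enF (s : ℕ) : ℂ := ((s / 2 : ℕ) : ℂ) + 1 / 2

/-- energy operator -/
def L0D : FockD →ₗ[ℂ] FockD := diagL enF

theorem L0_comm_a (k : ℤ) (w : FockD) :
    L0D (aOp k w) = aOp k (L0D w) + (((k / 2 : ℤ) : ℂ) + 1 / 2) • aOp k w := by
  apply diag_comm_a enF (fun k => ((k / 2 : ℤ) : ℂ) + 1 / 2)
  · intro t
    simp only [enF]
    congr 1
  · intro t
    simp only [enF]
    have : (-(t : ℤ) - 1) / 2 = -((t / 2 : ℕ) : ℤ) - 1 := by omega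
    rw [this, Int.cast_sub, Int.cast_neg, Int.cast_natCast, Int.cast_one]; ring

theorem L0_vac : L0D (eD ∅) = 0 := by
  rw [L0D, diagL_eD]; simp

theorem ch_comm_a (k : ℤ) (w : FockD) :
    diagL (fun s => epsD s) (aOp k w) = aOp k (diagL (fun s => epsD s) w) + epsD k • aOp k w := by
  apply diag_comm_a
  · intro t; rfl
  · intro t
    have := epsD_add_odd (t : ℤ) (-(t : ℤ) - 1)
    rw [← this]; congr 1; ring

theorem hL_zero (w : FockD) : hL 0 w = diagL (fun s => epsD s) w := by
  have h := commutant (hL 0 - diagL (fun s => epsD s)) (by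
    intro k w
    simp only [LinearMap.sub_apply, map_sub]
    rw [h_comm_a, ch_comm_a]
    simp) w
  have h2 : (hL 0 - diagL (fun s => epsD s)) (eD ∅) ∅ = 0 := by
    rw [LinearMap.sub_apply, Finsupp.sub_apply, hL_vac_coeff, diagL_coeff]; simp
  rw [h2, zero_smul, LinearMap.sub_apply] at h
  exact sub_eq_zero.1 h

theorem L0_comm_h (n : ℤ) (w : FockD) : L0D (hL n w) = hL n (L0D w) - (n : ℂ) • hL n w := by
  have h := commutant (L0D ∘ₗ hL n - hL n ∘ₗ L0D + (n : ℂ) • hL n) (by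
    intro k w
    simp only [LinearMap.sub_apply, LinearMap.add_apply, LinearMap.smul_apply,
      LinearMap.comp_apply, map_sub, map_add, map_smul]
    simp only [h_comm_a, L0_comm_a, map_add, map_smul]
    have : (k - 2 * n) / 2 = k / 2 - n := by omega
    rw [this]
    push_cast
    module) w
  have h2 : (L0D ∘ₗ hL n - hL n ∘ₗ L0D + (n : ℂ) • hL n) (eD ∅) ∅ = 0 := by
    simp only [LinearMap.sub_apply, LinearMap.add_apply, LinearMap.smul_apply,
      LinearMap.comp_apply, L0_vac, map_zero, Finsupp.sub_apply, Finsupp.add_apply,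
      Finsupp.smul_apply, hL_vac_coeff]
    rw [L0D, diagL_coeff]
    simp
  rw [h2, zero_smul] at h
  simp only [LinearMap.sub_apply, LinearMap.add_apply, LinearMap.smul_apply,
      LinearMap.comp_apply] at h
  rw [← sub_eq_zero, ← h]; abel

/-- commutator of two Heisenberg operators is a scalar -/
theorem heis_scalar (m n : ℤ) (w : FockD) :
    hL m (hL n w) - hL n (hL m w)
      = (hL m (hL n (eD ∅)) - hL n (hL m (eD ∅)) : FockD) ∅ • w := by
  have h := commutant (hL m ∘ₗ hL n - hL n ∘ₗ hL m) (by
    intro k w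
    simp only [LinearMap.sub_apply, LinearMap.comp_apply, map_sub]
    simp only [h_comm_a, map_add, map_smul]
    have e1 : epsD (k - 2 * n) = epsD k := by
      rw [← epsD_add_even k (-n)]; congr 1; ring
    have e2 : epsD (k - 2 * m) = epsD k := by
      rw [← epsD_add_even k (-m)]; congr 1; ring
    rw [e1, e2, show k - 2 * n - 2 * m = k - 2 * m - 2 * n by ring]
    module) w
  simpa only [LinearMap.sub_apply, LinearMap.comp_apply] using h

theorem heis_ne (m n : ℤ) (hmn : m + n ≠ 0) (w : FockD) :
    hL m (hL n w) = hL n (hL m w) := by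
  have h := heis_scalar m n
  set c := (hL m (hL n (eD ∅)) - hL n (hL m (eD ∅)) : FockD) ∅ with hc
  have h1 := congrArg L0D (h (eD ∅))
  rw [map_smul, L0_vac, smul_zero, map_sub] at h1
  simp only [L0_comm_h, L0_vac, map_zero, map_sub, map_smul] at h1
  have h2 : ((m : ℂ) + n) • (c • eD ∅) = 0 := by
    rw [← h, ← neg_eq_zero, ← h1]; module
  have h3 : (m : ℂ) + n ≠ 0 := by exact_mod_cast hmn
  have h4 : c = 0 := by
    have := congrArg (fun v : FockD => v ∅) h2
    simpa [eD, h3] using this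
  have h5 := h w
  rw [h4, zero_smul] at h5
  exact sub_eq_zero.1 h5

theorem heis_eq (m : ℤ) (hm : 0 < m) (w : FockD) :
    hL m (hL (-m) w) = hL (-m) (hL m w) + (m : ℂ) • w := by
  have h := heis_scalar m (-m) w
  have hv : hL m (hL (-m) (eD ∅)) = (m : ℂ) • eD ∅ := by
    rw [hL_par (-m) 1 (eD ∅) (Finset.Icc 0 (m - 1))]
    · rw [map_smul, map_sum]
      have : ∀ r ∈ Finset.Icc 0 (m - 1),
          hL m (NO (1 + 2 * r) (-2 * -m - 1 - (1 + 2 * r)) (eD ∅)) = eD ∅ := by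
        intro r hr
        rw [Finset.mem_Icc] at hr
        rw [NO_pos _ _ (by omega), h_comm_a, h_comm_a, hL_vac m hm.le,
          aOp_neg_vac (-2 * -m - 1 - (1 + 2 * r) - 2 * m) (by omega)]
        have := car (1 + 2 * r - 2 * m) (-2 * -m - 1 - (1 + 2 * r)) (eD ∅)
        rw [aOp_neg_vac (1 + 2 * r - 2 * m) (by omega), if_pos (by ring)] at this
        have e : epsD (1 + 2 * r) = 1 := by rw [add_comm, epsD_odd]
        simp only [map_zero, smul_zero, add_zero, zero_add] at this ⊢
        rw [this, e, one_smul]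
      rw [Finset.sum_congr rfl this, Finset.sum_const, Int.card_Icc]
      have e : epsD 1 = 1 := by simpa using epsD_odd 0
      rw [e, one_smul, ← Nat.cast_smul_eq_nsmul ℂ]
      congr 1
      have : ((m - 1 + 1 - 0).toNat : ℤ) = m := by omega
      exact_mod_cast this
    · intro r hr
      rw [Finset.mem_Icc] at hr
      by_cases h0 : 0 ≤ 1 + 2 * r
      · rw [NO_pos _ _ h0, aOp_neg_vac _ (by omega), map_zero]
      · rw [NO_neg _ _ (by omega), aOp_neg_vac _ (by omega), map_zero, neg_zero]
  rw [hv, hL_vac m hm.le, map_zero, sub_zero] at h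
  have e : ((m : ℂ) • eD ∅ : FockD) ∅ = m := by simp [eD]
  rw [e] at h
  rw [← h]; abel

theorem hL_large (w : FockD) : ∃ M : ℤ, ∀ m ≥ M, hL m w = 0 := by
  obtain ⟨N, hN0, hN⟩ := locfin w
  refine ⟨N + 1, fun m hm => ?_⟩
  rw [hL_par m 0 w ∅]
  · simp
  · intro r _
    by_cases h0 : 0 ≤ 0 + 2 * r
    · rw [NO_pos _ _ h0, hN _ (by omega), map_zero]
    · rw [NO_neg _ _ (by omega)]
      by_cases h1 : 0 + 2 * r < -N
      · rw [hN _ h1]; simp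
      · rw [anti _ _ (by omega), hN _ (by omega)]; simp

theorem sug_supp (w : FockD) :
    (Function.support fun m : ℕ => hL (-((m : ℤ) + 1)) (hL ((m : ℤ) + 1) w)).Finite := by
  obtain ⟨M, hM⟩ := hL_large w
  apply Set.Finite.subset (Finset.finite_toSet (Finset.range M.toNat))
  intro m hm
  by_contra hc
  apply hm
  simp only [Finset.coe_range, Set.mem_Iio, not_lt] at hc
  simp only
  rw [hM _ (by omega), map_zero]

/-- sum of `h_{-m} h_m` over positive `m` -/
def sugL : FockD →ₗ[ℂ] FockD where
  toFun w := ∑ᶠ m : ℕ, hL (-((m : ℤ) + 1)) (hL ((m : ℤ) + 1) w)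
  map_add' x y := by
    rw [← finsum_add_distrib (sug_supp x) (sug_supp y)]
    simp only [map_add]
  map_smul' c x := by
    rw [RingHom.id_apply, smul_finsum' c (sug_supp x)]
    simp only [map_smul]

theorem sugL_eq (w : FockD) (M : ℕ) (hM : ∀ m ≥ (M : ℤ), hL m w = 0) :
    sugL w = ∑ m ∈ Finset.range M, hL (-((m : ℤ) + 1)) (hL ((m : ℤ) + 1) w) := by
  change (∑ᶠ m : ℕ, hL (-((m : ℤ) + 1)) (hL ((m : ℤ) + 1) w)) = _
  apply finsum_eq_sum_of_support_subset
  intro m hm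
  by_contra hc
  apply hm
  simp only [Finset.coe_range, Set.mem_Iio, not_lt] at hc
  simp only
  rw [hM _ (by omega), map_zero]

theorem sum_symm (F : ℤ → FockD) (M : ℕ) :
    ∑ x ∈ Finset.Icc (-(M : ℤ)) M, F x
      = F 0 + ∑ m ∈ Finset.range M, (F ((m : ℤ) + 1) + F (-((m : ℤ) + 1))) := by
  induction M with
  | zero => simp
  | succ M ih =>
    have : Finset.Icc (-((M + 1 : ℕ) : ℤ)) ((M + 1 : ℕ) : ℤ)
        = insert ((M : ℤ) + 1) (insert (-((M : ℤ) + 1)) (Finset.Icc (-(M : ℤ)) M)) := by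
      ext x; simp only [Finset.mem_Icc, Finset.mem_insert]; push_cast; omega
    rw [this, Finset.sum_insert, Finset.sum_insert, ih, Finset.sum_range_succ]
    · abel
    · simp
    · simp; omega

/-- antisymmetric double sum -/
theorem cubic_sum (k : ℤ) (w : FockD) (M M' : ℤ) (hM : k / 2 ≤ M) (hM0 : 0 ≤ M) (hM' : M ≤ M')
    (hk : -(k / 2) - 1 ≤ M') :
    ∑ x ∈ Finset.Icc (-M) M', aOp (k + 2 * x)
        (∑ r ∈ Finset.Icc (-M) M', NO (k + 2 * r) (-2 * x - 1 - (k + 2 * r)) w)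
      = ((k / 2 - M : ℤ) : ℂ) • aOp k w := by
  set I := Finset.Icc (-M) M' with hI
  have e1 : ∀ x ∈ I, ∀ r ∈ I, aOp (k + 2 * x) (NO (k + 2 * r) (-2 * x - 1 - (k + 2 * r)) w)
      = aOp (k + 2 * x) (aOp (k + 2 * r) (aOp (-2 * x - 2 * r - 1 - k) w))
        - if x = 0 then (if k + 2 * r < 0 then aOp k w else 0) else 0 := by
    intro x _ r _
    rw [NO_eq, map_sub, show -2 * x - 1 - (k + 2 * r) = -2 * x - 2 * r - 1 - k by ring]
    congr 1
    by_cases hx : x = 0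
    · subst hx
      by_cases hr : k + 2 * r < 0
      · rw [if_pos (by omega), if_pos rfl, if_pos hr]; simp
      · rw [if_neg (by omega), if_pos rfl, if_neg hr]; simp
    · rw [if_neg (by omega), if_neg hx, map_zero]
  simp only [map_sum]
  rw [Finset.sum_congr rfl (fun x hx => Finset.sum_congr rfl (e1 x hx))]
  simp only [Finset.sum_sub_distrib]
  have e2 : ∑ x ∈ I, ∑ r ∈ I,
      aOp (k + 2 * x) (aOp (k + 2 * r) (aOp (-2 * x - 2 * r - 1 - k) w)) = 0 := by
    have h1 : ∑ x ∈ I, ∑ r ∈ I,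
        aOp (k + 2 * x) (aOp (k + 2 * r) (aOp (-2 * x - 2 * r - 1 - k) w))
        = - ∑ x ∈ I, ∑ r ∈ I,
        aOp (k + 2 * x) (aOp (k + 2 * r) (aOp (-2 * x - 2 * r - 1 - k) w)) := by
      conv_lhs => rw [Finset.sum_comm]
      rw [← Finset.sum_neg_distrib]
      refine Finset.sum_congr rfl fun x _ => ?_
      rw [← Finset.sum_neg_distrib]
      refine Finset.sum_congr rfl fun r _ => ?_
      rw [anti _ _ (by omega), show -2 * r - 2 * x - 1 - k = -2 * x - 2 * r - 1 - k by ring]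
    exact self_eq_neg.1 h1
  rw [e2, zero_sub]
  have e3 : ∑ x ∈ I, ∑ r ∈ I,
      (if x = 0 then (if k + 2 * r < 0 then aOp k w else 0) else 0)
      = ((M - k / 2 : ℤ) : ℂ) • aOp k w := by
    rw [Finset.sum_eq_single (0 : ℤ)]
    · simp only [if_true]
      rw [← Finset.sum_filter, Finset.sum_const]
      have : I.filter (fun r => k + 2 * r < 0) = Finset.Icc (-M) (-(k / 2) - 1) := by
        ext r; simp only [hI, Finset.mem_filter, Finset.mem_Icc]; omega
      rw [this, Int.card_Icc, ← Nat.cast_smul_eq_nsmul ℂ]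
      congr 1
      have : ((-(k / 2) - 1 + 1 - -M).toNat : ℤ) = M - k / 2 := by omega
      exact_mod_cast this
    · intro b _ hb
      simp [hb]
    · intro h
      exact absurd (Finset.mem_Icc.2 ⟨by omega, by omega⟩) h
  rw [e3, ← neg_smul]
  congr 1
  push_cast; ring

theorem sug_comm_a (k : ℤ) (w : FockD) :
    sugL (aOp k w) + (1 / 2 : ℂ) • hL 0 (hL 0 (aOp k w))
      = aOp k (sugL w + (1 / 2 : ℂ) • hL 0 (hL 0 w))
        + (((k / 2 : ℤ) : ℂ) + 1 / 2) • aOp k w := by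
  obtain ⟨N, hN0, hN⟩ := locfin w
  obtain ⟨M1, hM1⟩ := hL_large w
  obtain ⟨M2, hM2⟩ := hL_large (aOp k w)
  obtain ⟨M, h1, h2, h3⟩ : ∃ M : ℕ, M1 ≤ M ∧ M2 ≤ M ∧ N + |k| ≤ M :=
    ⟨(max M1 (max M2 (N + |k|))).toNat, by omega, by omega, by omega⟩
  have k1 := le_abs_self k
  have k2 := neg_abs_le k
  have k3 := abs_nonneg k
  rw [sugL_eq w M (fun m hm => hM1 m (by omega)),
    sugL_eq (aOp k w) M (fun m hm => hM2 m (by omega))]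
  have ee := epsD_sq k
  have step : ∀ m ∈ Finset.range M, hL (-((m : ℤ) + 1)) (hL ((m : ℤ) + 1) (aOp k w))
      = aOp k (hL (-((m : ℤ) + 1)) (hL ((m : ℤ) + 1) w))
        + epsD k • (aOp (k + 2 * ((m : ℤ) + 1)) (hL ((m : ℤ) + 1) w)
            + aOp (k + 2 * (-((m : ℤ) + 1))) (hL (-((m : ℤ) + 1)) w)) + aOp k w := by
    intro m _
    have e1 : epsD (k - 2 * ((m : ℤ) + 1)) = epsD k := by
      rw [← epsD_add_even k (-((m : ℤ) + 1))]; congr 1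
    rw [h_comm_a, map_add, h_comm_a, map_smul, h_comm_a, e1, smul_add, smul_smul, ee, one_smul,
      show k - 2 * -((m : ℤ) + 1) = k + 2 * ((m : ℤ) + 1) by ring,
      show k - 2 * ((m : ℤ) + 1) - 2 * -((m : ℤ) + 1) = k by ring,
      show k + 2 * -((m : ℤ) + 1) = k - 2 * ((m : ℤ) + 1) by ring]
    module
  have z : hL 0 (hL 0 (aOp k w)) = aOp k (hL 0 (hL 0 w))
      + (2 * epsD k) • aOp k (hL 0 w) + aOp k w := by
    simp only [h_comm_a, map_add, map_smul, mul_zero, sub_zero, smul_add, smul_smul, ee]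
    module
  rw [Finset.sum_congr rfl step, z, Finset.sum_add_distrib, Finset.sum_add_distrib,
    Finset.sum_const, Finset.card_range, ← Finset.smul_sum, ← map_sum]
  have s1 := sum_symm (fun x => aOp (k + 2 * x) (hL x w)) M
  simp only [mul_zero, add_zero] at s1
  set T := ∑ m ∈ Finset.range M, (aOp (k + 2 * ((m : ℤ) + 1)) (hL ((m : ℤ) + 1) w)
            + aOp (k + 2 * (-((m : ℤ) + 1))) (hL (-((m : ℤ) + 1)) w)) with hT
  set M' : ℤ := M + N + |k| with hM'
  have s2 : ∑ x ∈ Finset.Icc (-(M : ℤ)) M, aOp (k + 2 * x) (hL x w)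
      = ∑ x ∈ Finset.Icc (-(M : ℤ)) M', aOp (k + 2 * x) (hL x w) := by
    apply Finset.sum_subset
    · intro x; simp only [Finset.mem_Icc]; omega
    · intro x hx hx2
      simp only [Finset.mem_Icc] at hx hx2
      rw [hM1 x (by omega), map_zero]
  have s3 : ∑ x ∈ Finset.Icc (-(M : ℤ)) M', aOp (k + 2 * x) (hL x w)
      = epsD k • ∑ x ∈ Finset.Icc (-(M : ℤ)) M', aOp (k + 2 * x)
        (∑ r ∈ Finset.Icc (-(M : ℤ)) M', NO (k + 2 * r) (-2 * x - 1 - (k + 2 * r)) w) := by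
    rw [Finset.smul_sum]
    refine Finset.sum_congr rfl fun x hx => ?_
    rw [hL_par x k w (Finset.Icc (-(M : ℤ)) M'), map_smul]
    intro r hr
    simp only [Finset.mem_Icc] at hr hx
    apply NO_zero_of _ _ N w hN0 hN
    omega
  rw [cubic_sum k w M M' (by omega) (by omega) (by omega) (by omega)] at s3
  have hTv : epsD k • T = ((k / 2 - (M : ℤ) : ℤ) : ℂ) • aOp k w - epsD k • aOp k (hL 0 w) := by
    have : T = epsD k • ((k / 2 - (M : ℤ) : ℤ) : ℂ) • aOp k w - aOp k (hL 0 w) := by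
      rw [← s3, ← s2, s1]; abel
    rw [this, smul_sub, smul_smul, ee, one_smul]
  rw [hTv, ← Nat.cast_smul_eq_nsmul ℂ, map_add, map_smul]
  push_cast
  module

theorem sugawara (w : FockD) :
    sugL w + (1 / 2 : ℂ) • hL 0 (hL 0 w) = L0D w := by
  have h := commutant (sugL + (1 / 2 : ℂ) • (hL 0 ∘ₗ hL 0) - L0D) (by
    intro k w
    simp only [LinearMap.sub_apply, LinearMap.add_apply, LinearMap.smul_apply,
      LinearMap.comp_apply]
    rw [sug_comm_a, L0_comm_a, map_sub]
    abel) w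
  have h2 : (sugL + (1 / 2 : ℂ) • (hL 0 ∘ₗ hL 0) - L0D) (eD ∅) = 0 := by
    simp only [LinearMap.sub_apply, LinearMap.add_apply, LinearMap.smul_apply,
      LinearMap.comp_apply]
    rw [sugL_eq (eD ∅) 0 (fun m hm => hL_vac m (by simpa using hm)), hL_vac 0 le_rfl, L0_vac]
    simp
  rw [h2] at h
  simp only [LinearMap.sub_apply, LinearMap.add_apply, LinearMap.smul_apply,
      LinearMap.comp_apply, Finsupp.coe_zero, Pi.zero_apply, zero_smul] at h
  exact sub_eq_zero.1 h
theorem sum_ge_sq (P : Finset ℕ) :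
    P.card ^ 2 ≤ ∑ p ∈ P, (2 * p + 1) ∧
      (P.card ^ 2 = ∑ p ∈ P, (2 * p + 1) → P = Finset.range P.card) := by
  induction P using Finset.induction_on_max with
  | empty => simp
  | insert a P ha ih =>
    have hn : a ∉ P := fun h => lt_irrefl _ (ha a h)
    have hc : P.card ≤ a := by
      have : P ⊆ Finset.range a := fun x hx => Finset.mem_range.2 (ha x hx)
      simpa using Finset.card_le_card this
    rw [Finset.sum_insert hn, Finset.card_insert_of_notMem hn]
    obtain ⟨h1, h2⟩ := ih
    refine ⟨by nlinarith, fun h => ?_⟩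
    have h3 : a = P.card := by nlinarith
    have h4 := h2 (by nlinarith)
    rw [Finset.range_add_one, ← h4, ← h3]

/-- doubled energy -/
def en2 (S : Finset ℕ) : ℕ := ∑ s ∈ S, (2 * (s / 2) + 1)

theorem en2_cast (S : Finset ℕ) : ∑ s ∈ S, enF s = (en2 S : ℂ) / 2 := by
  rw [en2, Nat.cast_sum, Finset.sum_div]
  refine Finset.sum_congr rfl fun s _ => ?_
  rw [enF, Nat.cast_add, Nat.cast_mul]
  push_cast
  ring

theorem chg_cast (S : Finset ℕ) : ∑ s ∈ S, epsD s = (chg S : ℂ) := by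
  rw [← Finset.sum_filter_add_sum_filter_not S (fun s => Odd s)]
  have e1 : ∀ s ∈ S.filter (fun s => Odd s), epsD s = 1 := by
    intro s hs
    obtain ⟨r, hr⟩ := (Finset.mem_filter.1 hs).2
    rw [hr]; exact_mod_cast epsD_odd r
  have e2 : ∀ s ∈ S.filter (fun s => ¬ Odd s), epsD s = -1 := by
    intro s hs
    obtain ⟨r, hr⟩ := Nat.not_odd_iff_even.1 (Finset.mem_filter.1 hs).2
    rw [hr, ← two_mul]; exact_mod_cast epsD_even r
  rw [Finset.sum_congr rfl e1, Finset.sum_congr rfl e2, Finset.sum_const, Finset.sum_const, chg]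
  simp only [Nat.not_odd_iff_even]
  push_cast
  simp; ring

theorem en2_split (S : Finset ℕ) :
    ∃ O V : Finset ℕ, S = O.image (fun i => 2 * i + 1) ∪ V.image (fun i => 2 * i) ∧
      chg S = (O.card : ℤ) - V.card ∧
      en2 S = ∑ p ∈ O, (2 * p + 1) + ∑ p ∈ V, (2 * p + 1) := by
  have i1 : Set.InjOn (fun s : ℕ => s / 2) (S.filter fun s => Odd s) := by
    intro a ha b hb h
    obtain ⟨r, hr⟩ := (Finset.mem_filter.1 ha).2
    obtain ⟨q, hq⟩ := (Finset.mem_filter.1 hb).2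
    simp only at h; omega
  have i2 : Set.InjOn (fun s : ℕ => s / 2) (S.filter fun s => Even s) := by
    intro a ha b hb h
    obtain ⟨r, hr⟩ := (Finset.mem_filter.1 ha).2
    obtain ⟨q, hq⟩ := (Finset.mem_filter.1 hb).2
    simp only at h; omega
  refine ⟨(S.filter fun s => Odd s).image (· / 2), (S.filter fun s => Even s).image (· / 2),
    ?_, ?_, ?_⟩
  · ext x
    simp only [Finset.mem_union, Finset.mem_image, Finset.mem_filter]
    constructor
    · intro hx
      rcases Nat.even_or_odd x with h | h
      · right
        refine ⟨x / 2, ⟨x, ⟨hx, h⟩, rfl⟩, ?_⟩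
        obtain ⟨r, hr⟩ := h; omega
      · left
        refine ⟨x / 2, ⟨x, ⟨hx, h⟩, rfl⟩, ?_⟩
        obtain ⟨r, hr⟩ := h; omega
    · rintro (⟨a, ⟨y, ⟨hy, r, hr⟩, rfl⟩, rfl⟩ | ⟨a, ⟨y, ⟨hy, r, hr⟩, rfl⟩, rfl⟩)
      · convert hy using 1; omega
      · convert hy using 1; omega
  · rw [Finset.card_image_of_injOn i1, Finset.card_image_of_injOn i2, chg]
  · rw [Finset.sum_image i1, Finset.sum_image i2, en2,
      ← Finset.sum_filter_add_sum_filter_not S (fun s => Odd s)]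
    simp only [Nat.not_odd_iff_even]

theorem en2_bound (S : Finset ℕ) :
    (chg S) ^ 2 ≤ (en2 S : ℤ) ∧ ((chg S) ^ 2 = (en2 S : ℤ) → S = vSet (chg S)) := by
  obtain ⟨O, V, h1, h2, h3⟩ := en2_split S
  obtain ⟨o1, o2⟩ := sum_ge_sq O
  obtain ⟨v1, v2⟩ := sum_ge_sq V
  have h4 : (en2 S : ℤ) ≥ (O.card : ℤ) ^ 2 + (V.card : ℤ) ^ 2 := by
    rw [h3]; exact_mod_cast Nat.add_le_add o1 v1
  have h5 : (0 : ℤ) ≤ (O.card : ℤ) * V.card := by positivity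
  refine ⟨by rw [h2]; nlinarith, fun h => ?_⟩
  have h6 : (O.card : ℤ) * V.card = 0 := by rw [h2] at h; nlinarith
  have h7 : (en2 S : ℤ) = (O.card : ℤ) ^ 2 + (V.card : ℤ) ^ 2 := by
    rw [h2] at h; nlinarith
  rw [h3] at h7
  have h8 : ∑ p ∈ O, (2 * p + 1) + ∑ p ∈ V, (2 * p + 1) = O.card ^ 2 + V.card ^ 2 := by
    exact_mod_cast h7
  have ho := o2 (by omega)
  have hv := v2 (by omega)
  rcases mul_eq_zero.1 h6 with h0 | h0
  · have h0' : O.card = 0 := by exact_mod_cast h0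
    have hO : O = ∅ := Finset.card_eq_zero.1 h0'
    rw [h2, h0, zero_sub, vSet]
    split_ifs with hs
    · have : V.card = 0 := by omega
      have hV : V = ∅ := Finset.card_eq_zero.1 this
      rw [h1, hO, hV]; simp
    · rw [neg_neg, Int.toNat_natCast, ← hv, h1, hO]; simp
  · have h0' : V.card = 0 := by exact_mod_cast h0
    have hV : V = ∅ := Finset.card_eq_zero.1 h0'
    rw [h2, h0, sub_zero, vSet, if_pos (by omega), Int.toNat_natCast, ← ho, h1, hV]; simp

theorem vSet_chg (n : ℤ) : chg (vSet n) = n := by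
  unfold vSet chg
  split_ifs with h
  · have e1 : ((Finset.range n.toNat).image fun i => 2 * i + 1).filter (fun s => Odd s)
        = (Finset.range n.toNat).image fun i => 2 * i + 1 := by
      apply Finset.filter_true_of_mem
      intro x hx
      obtain ⟨a, _, rfl⟩ := Finset.mem_image.1 hx
      exact ⟨a, rfl⟩
    have e2 : ((Finset.range n.toNat).image fun i => 2 * i + 1).filter (fun s => Even s) = ∅ := by
      apply Finset.filter_false_of_mem
      intro x hx
      obtain ⟨a, _, rfl⟩ := Finset.mem_image.1 hx
      rintro ⟨r, hr⟩; omega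
    rw [e1, e2, Finset.card_image_of_injective _ (fun a b h => by simpa using h)]
    simp; omega
  · have e1 : ((Finset.range (-n).toNat).image fun i => 2 * i).filter (fun s => Even s)
        = (Finset.range (-n).toNat).image fun i => 2 * i := by
      apply Finset.filter_true_of_mem
      intro x hx
      obtain ⟨a, _, rfl⟩ := Finset.mem_image.1 hx
      exact ⟨a, by ring⟩
    have e2 : ((Finset.range (-n).toNat).image fun i => 2 * i).filter (fun s => Odd s) = ∅ := by
      apply Finset.filter_false_of_mem
      intro x hx
      obtain ⟨a, _, rfl⟩ := Finset.mem_image.1 hx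
      rintro ⟨r, hr⟩; omega
    rw [e1, e2, Finset.card_image_of_injective _ (fun a b h => by simpa using h)]
    simp; omega

theorem sum_odd_range (m : ℕ) : ∑ i ∈ Finset.range m, (2 * i + 1) = m ^ 2 := by
  induction m with
  | zero => simp
  | succ m ih => rw [Finset.sum_range_succ, ih]; ring

theorem vSet_en2 (n : ℤ) : (en2 (vSet n) : ℤ) = n ^ 2 := by
  unfold vSet en2
  split_ifs with h
  · rw [Finset.sum_image (fun a _ b _ h => by omega)]
    have : ∀ i ∈ Finset.range n.toNat, 2 * ((2 * i + 1) / 2) + 1 = 2 * i + 1 := by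
      intro i _; omega
    rw [Finset.sum_congr rfl this, sum_odd_range]
    push_cast
    rw [Int.toNat_of_nonneg h]
  · rw [Finset.sum_image (fun a _ b _ h => by omega)]
    have : ∀ i ∈ Finset.range (-n).toNat, 2 * (2 * i / 2) + 1 = 2 * i + 1 := by
      intro i _; omega
    rw [Finset.sum_congr rfl this, sum_odd_range]
    push_cast
    rw [Int.toNat_of_nonneg (by omega)]; ring

theorem mem_FockComp (n : ℤ) (w : FockD) :
    w ∈ FockComp n ↔ ∀ S, w S ≠ 0 → chg S = n := by
  have : FockComp n = Finsupp.supported ℂ ℂ {S : Finset ℕ | chg S = n} := by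
    rw [Finsupp.supported_eq_span_single, FockComp]
    congr 1
    ext x
    simp only [Set.mem_ofPred_eq, Set.mem_image, eD]
    constructor
    · rintro ⟨S, h1, h2⟩; exact ⟨S, h1, h2.symm⟩
    · rintro ⟨S, h1, h2⟩; exact ⟨S, h1, h2.symm⟩
  rw [this, Finsupp.mem_supported]
  simp only [Set.subset_def, Finset.mem_coe, Finsupp.mem_support_iff, Set.mem_ofPred_eq]

theorem mem_FockComp_iff (n : ℤ) (w : FockD) :
    w ∈ FockComp n ↔ hL 0 w = (n : ℂ) • w := by
  rw [mem_FockComp, hL_zero]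
  constructor
  · intro h
    ext S
    rw [diagL_coeff, chg_cast, Finsupp.smul_apply, smul_eq_mul]
    by_cases hS : w S = 0
    · simp [hS]
    · rw [h S hS]
  · intro h S hS
    have := congrArg (fun v : FockD => v S) h
    rw [diagL_coeff, chg_cast, Finsupp.smul_apply, smul_eq_mul] at this
    exact_mod_cast mul_right_cancel₀ hS this

theorem L0_supp (w : FockD) (c : ℂ) (h : L0D w = c • w) (S : Finset ℕ) (hS : w S ≠ 0) :
    (en2 S : ℂ) = 2 * c := by
  have := congrArg (fun v : FockD => v S) h
  rw [L0D, diagL_coeff, en2_cast, Finsupp.smul_apply, smul_eq_mul] at this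
  have := mul_right_cancel₀ hS this
  rw [← this]; ring

theorem vD_mem (n : ℤ) : vD n ∈ FockComp n :=
  Submodule.subset_span ⟨vSet n, vSet_chg n, rfl⟩

theorem L0_eD (S : Finset ℕ) : L0D (eD S) = ((en2 S : ℂ) / 2) • eD S := by
  rw [L0D, diagL_eD, en2_cast]

theorem hL_mem (m n : ℤ) (hm : m ≠ 0) (w : FockD) (h : w ∈ FockComp n) : hL m w ∈ FockComp n := by
  rw [mem_FockComp_iff] at *
  rw [heis_ne 0 m (by omega), h, map_smul]

theorem hL_vD (n m : ℤ) (hm : 0 < m) : hL m (vD n) = 0 := by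
  have h1 := hL_mem m n (by omega) _ (vD_mem n)
  rw [mem_FockComp] at h1
  have h2 : L0D (hL m (vD n)) = ((n : ℂ) ^ 2 / 2 - m) • hL m (vD n) := by
    have : (en2 (vSet n) : ℂ) = (n : ℂ) ^ 2 := by exact_mod_cast vSet_en2 n
    rw [L0_comm_h, vD, L0_eD, this, map_smul]; module
  ext S
  by_contra hS
  have hS' : hL m (vD n) S ≠ 0 := hS
  have h3 := L0_supp _ _ h2 S hS'
  have h4 : (en2 S : ℤ) = n ^ 2 - 2 * m := by
    have : (en2 S : ℂ) = (n : ℂ) ^ 2 - 2 * m := by rw [h3]; ring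
    exact_mod_cast this
  have h5 := (en2_bound S).1
  rw [h1 S hS'] at h5
  omega

/-- spanning: a submodule containing the vacuum and stable under creation modes is everything -/
theorem spanning (n : ℤ) (W : Submodule ℂ FockD) (hv : vD n ∈ W)
    (hW : ∀ m : ℕ, ∀ w ∈ W, hL (-((m : ℤ) + 1)) w ∈ W) : FockComp n ≤ W := by
  have key : ∀ d : ℕ, ∀ w ∈ FockComp n, L0D w = ((d : ℂ) / 2) • w → w ∈ W := by
    intro d
    induction d using Nat.strong_induction_on with
    | _ d ih =>
      intro w hw hL0
      by_cases hd : (d : ℤ) = n ^ 2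
      · have : w = w (vSet n) • vD n := by
          ext S
          by_cases hS : S = vSet n
          · simp [hS, vD, eD]
          · have h0 : w S = 0 := by
              by_contra hS0
              have h1 := L0_supp w _ hL0 S hS0
              have h2 : (en2 S : ℤ) = d := by
                have : (en2 S : ℂ) = d := by rw [h1]; ring
                exact_mod_cast this
              have h3 := (mem_FockComp n w).1 hw S hS0
              have h4 := (en2_bound S).2 (by rw [h3, h2, hd])
              rw [h3] at h4
              exact hS h4
            rw [h0]
            simp [vD, eD, Ne.symm hS]
        rw [this]
        exact W.smul_mem _ hv
      · have hs := sugawara w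
        have h0 := (mem_FockComp_iff n w).1 hw
        rw [h0, map_smul, h0, hL0] at hs
        have hne : ((d : ℂ) - (n : ℂ) ^ 2) / 2 ≠ 0 := by
          have : (d : ℂ) - (n : ℂ) ^ 2 ≠ 0 := by
            rw [sub_ne_zero]; exact_mod_cast hd
          exact div_ne_zero this (by norm_num)
        have h1 : sugL w = (((d : ℂ) - (n : ℂ) ^ 2) / 2) • w := by
          rw [eq_sub_of_add_eq hs]; module
        have h2 : sugL w ∈ W := by
          obtain ⟨M, hM⟩ := hL_large w
          rw [sugL_eq w M.toNat (fun m hm => hM m (by omega))]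
          apply W.sum_mem
          intro m _
          apply hW
          have hl : L0D (hL ((m : ℤ) + 1) w) = ((d : ℂ) / 2 - (m + 1)) • hL ((m : ℤ) + 1) w := by
            rw [L0_comm_h, hL0, map_smul]; push_cast; module
          by_cases hdm : 2 * (m + 1) ≤ d
          · apply ih (d - 2 * (m + 1)) (by omega) _ (hL_mem _ _ (by omega) _ hw)
            rw [hl, Nat.cast_sub hdm]
            congr 1
            push_cast; ring
          · have : hL ((m : ℤ) + 1) w = 0 := by
              ext S
              by_contra hS
              have h3 := L0_supp _ _ hl S hS
              have h4 : (en2 S : ℂ) + 2 * (m + 1) = d := by rw [h3]; ring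
              have h5 : en2 S + 2 * (m + 1) = d := by exact_mod_cast h4
              omega
            rw [this]; exact W.zero_mem
        rw [h1] at h2
        exact (W.smul_mem_iff hne).1 h2
  rw [FockComp, Submodule.span_le]
  rintro x ⟨S, hS, rfl⟩
  exact key (en2 S) (eD S) (Submodule.subset_span ⟨S, hS, rfl⟩) (L0_eD S)

/-- polynomial functional calculus for a commuting family -/
theorem exists_poly_action {B : Type*} [Ring B] [Algebra ℂ B] (A : ℕ → B)
    (hA : ∀ i j, A i * A j = A j * A i) :
    ∃ θ : MvPolynomial ℕ ℂ →ₐ[ℂ] B, ∀ i, θ (MvPolynomial.X i) = A i := by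
  have hcomm : IsMulCommutative (Algebra.adjoin ℂ (Set.range A)) :=
    Algebra.isMulCommutative_adjoin ℂ (by
      rintro _ ⟨i, rfl⟩ _ ⟨j, rfl⟩
      exact hA i j)
  let _ : CommRing (Algebra.adjoin ℂ (Set.range A)) :=
    { (Algebra.adjoin ℂ (Set.range A)).toRing with mul_comm := hcomm.is_comm.comm }
  let g : ℕ → Algebra.adjoin ℂ (Set.range A) := fun i => ⟨A i, Algebra.subset_adjoin ⟨i, rfl⟩⟩
  refine ⟨(Algebra.adjoin ℂ (Set.range A)).val.comp (MvPolynomial.aeval g), fun i => ?_⟩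
  simp [g]

theorem poly_const (p : MvPolynomial ℕ ℂ) (h : ∀ m, MvPolynomial.pderiv m p = 0) :
    p = MvPolynomial.C (p.coeff 0) := by
  ext s
  rw [MvPolynomial.coeff_C]
  split_ifs with h0
  · rw [h0]
  · obtain ⟨m, hm⟩ : ∃ m, s m ≠ 0 := by
      by_contra hc
      push Not at hc
      exact h0 (Finsupp.ext fun i => (hc i).symm)
    have := congrArg (MvPolynomial.coeff (s - Finsupp.single m 1)) (h m)
    rw [MvPolynomial.coeff_pderiv, tsub_add_cancel_of_le] at this
    · rw [MvPolynomial.coeff_zero] at this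
      rcases mul_eq_zero.1 this with h1 | h1
      · exact h1
      · exfalso; exact Nat.cast_add_one_ne_zero _ h1
    · rw [Finsupp.single_le_iff]; omega

theorem pderiv_deg (p : MvPolynomial ℕ ℂ) (m : ℕ) (h : MvPolynomial.pderiv m p ≠ 0) :
    (MvPolynomial.pderiv m p).totalDegree < p.totalDegree := by
  have key : ∀ s ∈ (MvPolynomial.pderiv m p).support, (s.sum fun _ e => e) + 1 ≤ p.totalDegree := by
    intro s hs
    rw [MvPolynomial.mem_support_iff, MvPolynomial.coeff_pderiv] at hs
    have h1 : s + Finsupp.single m 1 ∈ p.support := by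
      rw [MvPolynomial.mem_support_iff]; exact left_ne_zero_of_mul hs
    have h2 := MvPolynomial.le_totalDegree h1
    rwa [Finsupp.sum_add_index' (by simp) (by simp), Finsupp.sum_single_index (by rfl)] at h2
  obtain ⟨s, hs⟩ := MvPolynomial.support_nonempty.2 h
  have h0 := key s hs
  unfold MvPolynomial.totalDegree at *
  rw [Finset.sup_lt_iff (by rw [Nat.bot_eq_zero]; exact lt_of_lt_of_le (Nat.succ_pos _) h0)]
  intro b hb
  have := key b hb
  omega

theorem main_aux (n : ℤ) : ∃ Ψ : MvPolynomial ℕ ℂ →ₗ[ℂ] FockD,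
    Ψ 1 = vD n ∧ (∀ (m : ℕ) p, Ψ (MvPolynomial.X m * p) = ((m : ℂ) + 1)⁻¹ • hL (-((m : ℤ) + 1)) (Ψ p)) ∧
    (∀ (m : ℕ) p, Ψ (MvPolynomial.pderiv m p) = hL ((m : ℤ) + 1) (Ψ p)) := by
  obtain ⟨θ, hθ⟩ := exists_poly_action (B := Module.End ℂ FockD) (fun m : ℕ => ((m : ℂ) + 1)⁻¹ • hL (-((m : ℤ) + 1))) (by
    intro i j
    refine LinearMap.ext fun x => ?_
    simp only [Module.End.mul_apply, LinearMap.smul_apply, map_smul]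
    rw [heis_ne _ _ (by omega), smul_comm])
  refine ⟨(LinearMap.applyₗ (vD n)).comp θ.toLinearMap, ?_, ?_, ?_⟩
  · simp
  · intro m p
    simp [hθ]
  · intro m p
    simp only [LinearMap.comp_apply, AlgHom.toLinearMap_apply, LinearMap.applyₗ_apply_apply]
    induction p using MvPolynomial.induction_on with
    | C a =>
      have : MvPolynomial.C a = algebraMap ℂ (MvPolynomial ℕ ℂ) a := rfl
      rw [MvPolynomial.pderiv_C, this, AlgHom.commutes]
      simp [Module.algebraMap_end_apply, hL_vD n ((m : ℤ) + 1) (by omega)]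
    | add p q hp hq =>
      simp only [map_add, LinearMap.add_apply, hp, hq]
    | mul_X p i hp =>
      rw [mul_comm p, Derivation.leibniz, MvPolynomial.pderiv_X]
      simp only [smul_eq_mul, map_add, map_mul, LinearMap.add_apply, Module.End.mul_apply, hθ,
        LinearMap.smul_apply, hp, map_smul]
      by_cases him : i = m
      · subst him
        have hne : (i : ℂ) + 1 ≠ 0 := by exact_mod_cast Nat.succ_ne_zero i
        rw [heis_eq ((i : ℤ) + 1) (by omega)]
        simp only [Pi.single_eq_same, map_one, Module.End.one_apply, smul_add, smul_smul]
        push_cast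
        rw [inv_mul_cancel₀ hne, one_smul]
      · rw [heis_ne ((m : ℤ) + 1) (-((i : ℤ) + 1)) (by omega)]
        simp [Pi.single_apply, Ne.symm him, him]

theorem eD_ne (S : Finset ℕ) : eD S ≠ 0 := by simp [eD]

/-- There is a ℂ-linear bijection `Φ` from the charge-`n` component `F_{(n)}` onto the
polynomial algebra `ℂ[x_1, x_2, …]` (realized as `MvPolynomial ℕ ℂ`, the variable of
index `m : ℕ` standing for `x_{m+1}`) with `Φ(v_n) = 1`, and intertwining the Heisenberg
action: for `u ∈ F_{(n)}` and `m ≥ 1`, `Φ(h_m u) = ∂Φ(u)/∂x_m`,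
`Φ(h_{−m} u) = m · x_m · Φ(u)`, and `Φ(h_0 u) = n · Φ(u)`. -/
theorem bosonic_realization_of_charge_component (n : ℤ) :
    ∃ Φ : FockD →ₗ[ℂ] MvPolynomial ℕ ℂ,
      Set.BijOn Φ (FockComp n : Set FockD) Set.univ ∧
      Φ (vD n) = 1 ∧
      ∀ u ∈ FockComp n,
        (∀ m : ℕ, Φ (hD ((m : ℤ) + 1) u) = MvPolynomial.pderiv m (Φ u)) ∧
        (∀ m : ℕ, Φ (hD (-(m : ℤ) - 1) u) = ((m : ℂ) + 1) • (MvPolynomial.X m * Φ u)) ∧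
        Φ (hD 0 u) = (n : ℂ) • Φ u := by
  obtain ⟨Ψ, h1, hX, hd⟩ := main_aux n
  have hinj : Function.Injective Ψ := by
    rw [← LinearMap.ker_eq_bot, LinearMap.ker_eq_bot']
    have key : ∀ d : ℕ, ∀ p : MvPolynomial ℕ ℂ, p.totalDegree = d → Ψ p = 0 → p = 0 := by
      intro d
      induction d using Nat.strong_induction_on with
      | _ d ih =>
        intro p hp h0
        have hall : ∀ m, MvPolynomial.pderiv m p = 0 := by
          intro m
          by_contra hne
          exact hne (ih _ (hp ▸ pderiv_deg p m hne) _ rfl (by rw [hd, h0, map_zero]))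
        have hc := poly_const p hall
        rw [hc] at h0 ⊢
        rw [← mul_one (MvPolynomial.C _), MvPolynomial.C_mul', map_smul, h1] at h0
        rcases smul_eq_zero.1 h0 with h | h
        · rw [h, map_zero]
        · exact absurd h (eD_ne _)
    intro p hp
    exact key _ p rfl hp
  have hstep : ∀ (m : ℕ) p, hL (-((m : ℤ) + 1)) (Ψ p)
      = Ψ (((m : ℂ) + 1) • (MvPolynomial.X m * p)) := by
    intro m p
    have hne : (m : ℂ) + 1 ≠ 0 := by exact_mod_cast Nat.succ_ne_zero m
    rw [map_smul, hX, smul_smul, mul_inv_cancel₀ hne, one_smul]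
  have hmem : ∀ p, Ψ p ∈ FockComp n := by
    intro p
    induction p using MvPolynomial.induction_on with
    | C a =>
      rw [← mul_one (MvPolynomial.C _), MvPolynomial.C_mul', map_smul, h1]
      exact Submodule.smul_mem _ _ (vD_mem n)
    | add p q hp hq => rw [map_add]; exact Submodule.add_mem _ hp hq
    | mul_X p i hp =>
      rw [mul_comm, hX]
      exact Submodule.smul_mem _ _ (hL_mem _ _ (by omega) _ hp)
  have hsurj : FockComp n ≤ LinearMap.range Ψ := by
    apply spanning n
    · exact ⟨1, h1⟩
    · rintro m w ⟨p, rfl⟩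
      rw [hstep]
      exact ⟨_, rfl⟩
  obtain ⟨Φ, hΦ⟩ := Ψ.exists_leftInverse_of_injective (LinearMap.ker_eq_bot.2 hinj)
  have hΦ' : ∀ p, Φ (Ψ p) = p := fun p => LinearMap.congr_fun hΦ p
  refine ⟨Φ, ⟨fun _ _ => Set.mem_univ _, ?_, ?_⟩, ?_, ?_⟩
  · intro x hx y hy hxy
    obtain ⟨p, rfl⟩ := hsurj hx
    obtain ⟨q, rfl⟩ := hsurj hy
    rw [hΦ', hΦ'] at hxy
    rw [hxy]
  · intro p _
    exact ⟨Ψ p, hmem p, hΦ' p⟩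
  · rw [← h1, hΦ']
  · intro u hu
    obtain ⟨p, rfl⟩ := hsurj hu
    refine ⟨fun m => ?_, fun m => ?_, ?_⟩
    · rw [← hL_apply, ← hd, hΦ', hΦ']
    · rw [← hL_apply, show -(m : ℤ) - 1 = -((m : ℤ) + 1) by ring, hstep, hΦ', hΦ']
    · rw [← hL_apply, (mem_FockComp_iff n _).1 hu, map_smul]
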